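/- arXiv:2410.19339 — 2 statements merged into one kernel-verified Lean document; each statement's English description precedes it below -/
import Mathlib

section
/- Fix d ≥ 2. Call a tuple (a, b, q) with a, b ∈ ℝ^d and q : {0,1,2}^d → ℝ feasible if: 0 ≤ a_i < b_i ≤ 1 for all i; 0 ≤ q_J − q_I ≤ b_ℓ − a_ℓ for all ℓ and all I ∼_ℓ J with J_ℓ = 1; 0 ≤ q_J − q_I ≤ 1 − b_ℓ for all ℓ and all I ∼_ℓ J with J_ℓ = 2; and max{0, G_d(x_I)} ≤ q_I ≤ H_d(x_I) for all I ∈ {0,1,2}^d, where x_I is the point with (x_I)_k = a_k if I_k = 0, b_k if I_k = 1, and 1 if I_k = 2. Set V(q) = Σ_{I ∈ {0,1}^d} (−1)^{d−‖I‖₁} q_I (the sum over multi-indices with entries in {0,1} only). Suppose (a*, b*, q*) is feasible and V(q*) ≤ V(q) for every feasible (a, b, q). Then there exists a d-quasi-copula Q with Q(x_I) = q*_I for all I ∈ {0,1,2}^d, and V(q*) is the minimal Q-volume over all d-quasi-copulas and all d-boxes: V_Q(B) ≥ V(q*) for every d-quasi-copula Q and every d-box B ⊆ [0,1]^d, and there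 exist a d-quasi-copula Q and a d-box B with V_Q(B) = V(q*). -/
/-!
A function is nondecreasing and `1`-Lipschitz for the `ℓ¹` norm exactly when
`f u - f v ≤ ∑ k, max 0 (u k - v k)`, that is, when it is `1`-Lipschitz for the asymmetric distance
on the right. Telescoping one coordinate at a time (`sub_le_sum_of_step`), the increment
constraints of the linear program say precisely that `q` satisfies this inequality on the grid
`Π {a_i, b_i, 1}` (`Feasible3.sub_le`). Hence the McShane-type formula
`Q(u) = max 0 (max_I (q_I - ∑ k, max 0 ((x_I)_k - u_k)))` defines an asymmetrically `1`-Lipschitz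
extension of `q`, and the bounds `G_d ≤ q ≤ H_d` supply the boundary conditions
(`Feasible3.isQuasiCopula_ext`).

Conversely, the values of a quasi-copula on the grid of any box form a feasible point
(`IsQuasiCopula.feasible3`), whose objective is the volume of the box (`Vq3_eq_boxVolume`). So
volumes of boxes and feasible values of the linear program are the same numbers.
-/


namespace QC

/-- A point lies in the unit cube `[0,1]^d`. -/
def InCube {d : ℕ} (u : Fin d → ℝ) : Prop := ∀ i, u i ∈ Set.Icc (0:ℝ) 1

/-- A `d`-quasi-copula: boundary conditions, monotonicity in each variable,
and the `ℓ¹`-Lipschitz condition, on the unit cube. -/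
structure IsQuasiCopula (d : ℕ) (Q : (Fin d → ℝ) → ℝ) : Prop where
  mem : ∀ u, InCube u → Q u ∈ Set.Icc (0:ℝ) 1
  bc0 : ∀ u, InCube u → (∃ i, u i = 0) → Q u = 0
  bc1 : ∀ (i : Fin d), ∀ t ∈ Set.Icc (0:ℝ) 1,
      Q (fun j => if j = i then t else 1) = t
  mono : ∀ (i : Fin d) (u v : Fin d → ℝ), InCube u → InCube v →
      (∀ j, j ≠ i → u j = v j) → u i ≤ v i → Q u ≤ Q v
  lip : ∀ u v, InCube u → InCube v → |Q u - Q v| ≤ ∑ i, |u i - v i|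

/-- `‖I‖₁` for a multi-index `I ∈ {0,1}^d`. -/
def normOne {d : ℕ} (I : Fin d → Bool) : ℕ :=
  (Finset.univ.filter fun k => I k = true).card

/-- The vertex `x_I` of the box `Π [a_i, b_i]`. -/
def vertex {d : ℕ} (a b : Fin d → ℝ) (I : Fin d → Bool) : Fin d → ℝ :=
  fun k => if I k then b k else a k

/-- The `Q`-volume of the box `Π [a_i, b_i]`. -/
def boxVolume {d : ℕ} (Q : (Fin d → ℝ) → ℝ) (a b : Fin d → ℝ) : ℝ :=
  ∑ I : Fin d → Bool, (-1 : ℝ) ^ (d - normOne I) * Q (vertex a b I)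

/-- `Π [a_i, b_i]` is a `d`-box inside `[0,1]^d` with `a_i < b_i`. -/
def IsBox {d : ℕ} (a b : Fin d → ℝ) : Prop :=
  ∀ i, 0 ≤ a i ∧ a i < b i ∧ b i ≤ 1

/-- `G_d(x) = Σ x_i - d + 1`. -/
def Gd {d : ℕ} (x : Fin d → ℝ) : ℝ := (∑ i, x i) - d + 1

/-- `H_d(x) = min { x_1, …, x_d }`. -/
noncomputable def Hd {d : ℕ} (x : Fin d → ℝ) : ℝ := ⨅ i, x i

/-- `I ∼_ℓ J` for multi-indices in `{0,1}^d`: `J - I = e^(ℓ)`. -/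
def Adj2 {d : ℕ} (I J : Fin d → Bool) (ℓ : Fin d) : Prop :=
  I ℓ = false ∧ J ℓ = true ∧ ∀ k, k ≠ ℓ → I k = J k

/-- The grid point `x_I ∈ Π {a_i, 1}` for `I ∈ {0,1}^d`. -/
def xI2 {d : ℕ} (a : Fin d → ℝ) (I : Fin d → Bool) : Fin d → ℝ :=
  fun k => if I k then 1 else a k

/-- The grid point `x_I ∈ Π {a_i, b_i, 1}` for `I ∈ {0,1,2}^d`. -/
def xI3 {d : ℕ} (a b : Fin d → ℝ) (I : Fin d → Fin 3) : Fin d → ℝ :=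
  fun k => if I k = 0 then a k else if I k = 1 then b k else 1

/-- `I ∼_ℓ J` for multi-indices in `{0,1,2}^d`: `J - I = e^(ℓ)`. -/
def Adj3 {d : ℕ} (I J : Fin d → Fin 3) (ℓ : Fin d) : Prop :=
  ((J ℓ : ℕ) = (I ℓ : ℕ) + 1) ∧ ∀ k, k ≠ ℓ → I k = J k

/-- The extended domain `D^ext = Π {a_i,1} ∪ ⋃ L_i`, where
`L_i = { x ∈ [0,1]^d : x_i = 0 }`. -/
def Dext2 {d : ℕ} (a : Fin d → ℝ) (x : Fin d → ℝ) : Prop :=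
  (∃ I : Fin d → Bool, x = xI2 a I) ∨ (InCube x ∧ ∃ i, x i = 0)

/-- The extended domain `D^ext = Π {a_i,b_i,1} ∪ ⋃ L_i`. -/
def Dext3 {d : ℕ} (a b : Fin d → ℝ) (x : Fin d → ℝ) : Prop :=
  (∃ I : Fin d → Fin 3, x = xI3 a b I) ∨ (InCube x ∧ ∃ i, x i = 0)

/-- Feasibility for the linear programs (3.1)/(3.4) on the `2^d` grid. -/
def Feasible2 {d : ℕ} (a b : Fin d → ℝ) (q : (Fin d → Bool) → ℝ) : Prop :=
  (∀ i, 0 ≤ a i ∧ a i < b i ∧ b i ≤ 1) ∧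
  (∀ (ℓ : Fin d) (I J : Fin d → Bool), Adj2 I J ℓ →
      0 ≤ q J - q I ∧ q J - q I ≤ b ℓ - a ℓ) ∧
  (∀ I, max 0 (Gd (vertex a b I)) ≤ q I ∧ q I ≤ Hd (vertex a b I))

/-- The objective `V(q) = Σ_{I ∈ {0,1}^d} (-1)^(d-‖I‖₁) q_I`. -/
def Vq {d : ℕ} (q : (Fin d → Bool) → ℝ) : ℝ :=
  ∑ I : Fin d → Bool, (-1 : ℝ) ^ (d - normOne I) * q I

/-- Feasibility for the linear program (3.3) on the `3^d` grid. -/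
def Feasible3 {d : ℕ} (a b : Fin d → ℝ) (q : (Fin d → Fin 3) → ℝ) : Prop :=
  (∀ i, 0 ≤ a i ∧ a i < b i ∧ b i ≤ 1) ∧
  (∀ (ℓ : Fin d) (I J : Fin d → Fin 3), Adj3 I J ℓ → J ℓ = 1 →
      0 ≤ q J - q I ∧ q J - q I ≤ b ℓ - a ℓ) ∧
  (∀ (ℓ : Fin d) (I J : Fin d → Fin 3), Adj3 I J ℓ → J ℓ = 2 →
      0 ≤ q J - q I ∧ q J - q I ≤ 1 - b ℓ) ∧
  (∀ I, max 0 (Gd (xI3 a b I)) ≤ q I ∧ q I ≤ Hd (xI3 a b I))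

/-- The objective `V(q)` for the `3^d` grid: the sum runs over multi-indices
with entries in `{0,1}` only. -/
def Vq3 {d : ℕ} (q : (Fin d → Fin 3) → ℝ) : ℝ :=
  ∑ I : Fin d → Bool, (-1 : ℝ) ^ (d - normOne I) * q (fun k => if I k then 1 else 0)

/-- A point of a box all of whose coordinates are endpoints. -/
def IsVertexPoint {d : ℕ} (a b : Fin d → ℝ) (u : Fin d → ℝ) : Prop :=
  ∀ i, u i = a i ∨ u i = b i

/-- A point lies in the box `Π [a_i, b_i]`. -/
def InBox {d : ℕ} (a b : Fin d → ℝ) (u : Fin d → ℝ) : Prop :=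
  ∀ i, u i ∈ Set.Icc (a i) (b i)

/-- `F` is multilinear on the box `Π [a_i, b_i]`: affine separately in each
variable (on the box). -/
def MultilinearOnBox {d : ℕ} (a b : Fin d → ℝ) (F : (Fin d → ℝ) → ℝ) : Prop :=
  ∀ (i : Fin d) (u : Fin d → ℝ), InBox a b u →
    ∃ c e : ℝ, ∀ t ∈ Set.Icc (a i) (b i), F (Function.update u i t) = c * t + e

/-! ### Coordinatewise telescoping and grid points -/

/-- If changing the coordinate `ℓ` from `x` to `y` increases `f` by at most `w ℓ x y`, then the
total increment of `f` is at most the sum of these bounds over all coordinates. -/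
theorem sub_le_sum_of_step {d : ℕ} {α : Type*} (f : (Fin d → α) → ℝ) (w : Fin d → α → α → ℝ)
    (hw : ∀ (K : Fin d → α) (ℓ : Fin d) (x y : α),
      f (Function.update K ℓ y) - f (Function.update K ℓ x) ≤ w ℓ x y)
    (I J : Fin d → α) : f J - f I ≤ ∑ k, w k (I k) (J k) := by
  have key : ∀ s : Finset (Fin d), f (s.piecewise J I) - f I ≤ ∑ k ∈ s, w k (I k) (J k) := by
    intro s
    induction s using Finset.induction_on with
    | empty => simp
    | insert ℓ s hℓ ih =>
      have h := hw (s.piecewise J I) ℓ (I ℓ) (J ℓ)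
      rw [← Finset.piecewise_insert] at h
      have e : Function.update (s.piecewise J I) ℓ (I ℓ) = s.piecewise J I := by
        conv_rhs => rw [← Function.update_eq_self ℓ (s.piecewise J I)]
        rw [Finset.piecewise_eq_of_notMem _ _ _ hℓ]
      rw [e] at h
      rw [Finset.sum_insert hℓ]
      linarith
  simpa using key Finset.univ

theorem Hd_le {d : ℕ} (x : Fin d → ℝ) (i : Fin d) : Hd x ≤ x i :=
  ciInf_le (Set.finite_range x).bddBelow i

theorem xI3_inCube {d : ℕ} {a b : Fin d → ℝ} (h : IsBox a b) (I : Fin d → Fin 3) :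
    InCube (xI3 a b I) := by
  intro k
  obtain ⟨h0, h1, h2⟩ := h k
  unfold xI3
  constructor <;> split_ifs <;> linarith

theorem vertex_eq_xI3 {d : ℕ} (a b : Fin d → ℝ) (I : Fin d → Bool) :
    vertex a b I = xI3 a b (fun k => if I k then 1 else 0) := by
  funext k
  cases h : I k <;> simp [vertex, xI3, h]

theorem Vq3_eq_boxVolume {d : ℕ} {a b : Fin d → ℝ} {q : (Fin d → Fin 3) → ℝ}
    {Q : (Fin d → ℝ) → ℝ} (h : ∀ I, Q (xI3 a b I) = q I) : boxVolume Q a b = Vq3 q := by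
  simp only [boxVolume, Vq3, vertex_eq_xI3, h]

/-! ### From feasible points to quasi-copulas -/

/-- The constraints on neighbouring indices make `q` asymmetrically `1`-Lipschitz on the grid. -/
theorem Feasible3.sub_le {d : ℕ} {a b : Fin d → ℝ} {q : (Fin d → Fin 3) → ℝ}
    (h : Feasible3 a b q) (I J : Fin d → Fin 3) :
    q J - q I ≤ ∑ k, max 0 (xI3 a b J k - xI3 a b I k) := by
  obtain ⟨hbox, h1, h2, -⟩ := h
  let c : Fin d → Fin 3 → ℝ := fun k i => if i = 0 then a k else if i = 1 then b k else 1
  refine sub_le_sum_of_step q (fun k i j => max 0 (c k j - c k i)) ?_ I J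
  intro K ℓ x y
  have adj : ∀ x y : Fin 3, (y : ℕ) = (x : ℕ) + 1 →
      Adj3 (Function.update K ℓ x) (Function.update K ℓ y) ℓ := by
    intro x y hxy
    refine ⟨by simpa using hxy, fun k hk => by simp [hk]⟩
  have h01 := h1 ℓ _ _ (adj 0 1 rfl) (by simp)
  have h12 := h2 ℓ _ _ (adj 1 2 rfl) (by simp)
  obtain ⟨-, hab, hb1⟩ := hbox ℓ
  fin_cases x <;> fin_cases y <;> simp [c] <;> grind

/-- The smallest asymmetrically `1`-Lipschitz nonnegative function lying above the prescribed
values `q` on the grid. -/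
noncomputable def ext {d : ℕ} (a b : Fin d → ℝ) (q : (Fin d → Fin 3) → ℝ) (u : Fin d → ℝ) : ℝ :=
  Finset.univ.sup' Finset.univ_nonempty
    fun I => max 0 (q I - ∑ k, max 0 (xI3 a b I k - u k))

theorem le_ext {d : ℕ} (a b : Fin d → ℝ) (q : (Fin d → Fin 3) → ℝ) (u : Fin d → ℝ)
    (I : Fin d → Fin 3) : q I - ∑ k, max 0 (xI3 a b I k - u k) ≤ ext a b q u :=
  (le_max_right 0 _).trans <| Finset.le_sup'
    (fun I => max 0 (q I - ∑ k, max 0 (xI3 a b I k - u k))) (Finset.mem_univ I)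

theorem ext_nonneg {d : ℕ} (a b : Fin d → ℝ) (q : (Fin d → Fin 3) → ℝ) (u : Fin d → ℝ) :
    0 ≤ ext a b q u :=
  (le_max_left 0 _).trans <| Finset.le_sup'
    (fun I => max 0 (q I - ∑ k, max 0 (xI3 a b I k - u k))) (Finset.mem_univ fun _ => 0)

theorem ext_le {d : ℕ} {a b : Fin d → ℝ} {q : (Fin d → Fin 3) → ℝ} {u : Fin d → ℝ} {t : ℝ}
    (ht : 0 ≤ t) (h : ∀ I, q I - ∑ k, max 0 (xI3 a b I k - u k) ≤ t) : ext a b q u ≤ t :=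
  Finset.sup'_le _ _ fun I _ => max_le ht (h I)

theorem ext_sub_le {d : ℕ} (a b : Fin d → ℝ) (q : (Fin d → Fin 3) → ℝ) (u v : Fin d → ℝ) :
    ext a b q u - ext a b q v ≤ ∑ k, max 0 (u k - v k) := by
  rw [sub_le_iff_le_add]
  have hs : 0 ≤ ∑ k, max 0 (u k - v k) := Finset.sum_nonneg fun _ _ => le_max_left _ _
  refine ext_le (add_nonneg hs (ext_nonneg ..)) fun I => ?_
  have h := le_ext a b q v I
  have tri : ∑ k, max 0 (xI3 a b I k - v k) ≤
      ∑ k, max 0 (u k - v k) + ∑ k, max 0 (xI3 a b I k - u k) := by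
    rw [← Finset.sum_add_distrib]
    exact Finset.sum_le_sum fun k _ => by grind
  linarith

theorem Feasible3.ext_xI3 {d : ℕ} {a b : Fin d → ℝ} {q : (Fin d → Fin 3) → ℝ}
    (h : Feasible3 a b q) (I : Fin d → Fin 3) : ext a b q (xI3 a b I) = q I := by
  apply le_antisymm
  · refine ext_le ((le_max_left _ _).trans (h.2.2.2 I).1) fun J => ?_
    linarith [h.sub_le I J]
  · simpa using le_ext a b q (xI3 a b I) I

/-- The upper bound `q ≤ H_d` passes to the extension. -/
theorem Feasible3.ext_le_apply {d : ℕ} {a b : Fin d → ℝ} {q : (Fin d → Fin 3) → ℝ}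
    (h : Feasible3 a b q) {u : Fin d → ℝ} (i : Fin d) (hi : 0 ≤ u i) : ext a b q u ≤ u i := by
  refine ext_le hi fun I => ?_
  have h1 : q I ≤ xI3 a b I i := (h.2.2.2 I).2.trans (Hd_le _ i)
  have h2 := Finset.single_le_sum (f := fun k => max 0 (xI3 a b I k - u k))
    (fun _ _ => le_max_left _ _) (Finset.mem_univ i)
  have h3 := le_max_right 0 (xI3 a b I i - u i)
  linarith

theorem Feasible3.isQuasiCopula_ext {d : ℕ} (hd : 0 < d) {a b : Fin d → ℝ}
    {q : (Fin d → Fin 3) → ℝ} (h : Feasible3 a b q) : IsQuasiCopula d (ext a b q) where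
  mem u hu := ⟨ext_nonneg .., (h.ext_le_apply ⟨0, hd⟩ (hu _).1).trans (hu _).2⟩
  bc0 u hu := by
    rintro ⟨i, hi⟩
    exact le_antisymm ((h.ext_le_apply i (hu i).1).trans hi.le) (ext_nonneg ..)
  bc1 i t ht := by
    apply le_antisymm
    · simpa using h.ext_le_apply (u := fun j => if j = i then t else 1) i (by simpa using ht.1)
    · -- The corner `(1, …, 1)` of the grid, where `q ≥ G_d = 1`, gives the lower bound.
      have h1 := le_ext a b q (fun j => if j = i then t else 1) (fun _ => 2)
      have hx : xI3 a b (fun _ => 2) = fun _ => 1 := by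
        funext k
        simp [xI3]
      have h2 := (le_max_right _ _).trans (h.2.2.2 fun _ => 2).1
      have hs : ∑ k, max 0 ((1 : ℝ) - if k = i then t else 1) = 1 - t := by
        rw [Finset.sum_eq_single i]
        · simpa using ht.2
        · intro k _ hk
          simp [hk]
        · simp
      rw [hx] at h1 h2
      simp only [hs] at h1
      simp [Gd] at h2
      linarith
  mono i u v _ _ hj hi := by
    have h1 := ext_sub_le a b q u v
    have h2 : ∑ k, max 0 (u k - v k) = 0 := Finset.sum_eq_zero fun k _ => by
      by_cases hk : k = i
      · subst hk
        simpa using hi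
      · simp [hj k hk]
    linarith
  lip u v _ _ := by
    refine abs_sub_le_iff.2 ⟨(ext_sub_le ..).trans ?_, (ext_sub_le ..).trans ?_⟩
    · exact Finset.sum_le_sum fun k _ => max_le (abs_nonneg _) (le_abs_self _)
    · exact Finset.sum_le_sum fun k _ => max_le (abs_nonneg _) (by
        rw [abs_sub_comm]
        exact le_abs_self _)

/-! ### From quasi-copulas to feasible points -/

theorem IsQuasiCopula.mono_of_le {d : ℕ} {Q : (Fin d → ℝ) → ℝ} (hQ : IsQuasiCopula d Q)
    {u v : Fin d → ℝ} (hu : InCube u) (hv : InCube v) (h : u ≤ v) : Q u ≤ Q v := by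
  have key : ∀ s : Finset (Fin d), Q u ≤ Q (s.piecewise v u) := by
    have hc : ∀ s : Finset (Fin d), InCube (s.piecewise v u) := fun s k => by
      by_cases hk : k ∈ s
      · simpa [hk] using hv k
      · simpa [hk] using hu k
    intro s
    induction s using Finset.induction_on with
    | empty => simp
    | insert ℓ s hℓ ih =>
      refine ih.trans (hQ.mono ℓ _ _ (hc _) (hc _) (fun j hj => ?_) ?_)
      · simp [hj]
      · simpa [Finset.piecewise_insert, hℓ] using h ℓ
  simpa using key Finset.univ

/-- The Fréchet–Hoeffding bounds. -/
theorem IsQuasiCopula.bounds {d : ℕ} (hd : 0 < d) {Q : (Fin d → ℝ) → ℝ} (hQ : IsQuasiCopula d Q)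
    {u : Fin d → ℝ} (hu : InCube u) : max 0 (Gd u) ≤ Q u ∧ Q u ≤ Hd u := by
  refine ⟨max_le (hQ.mem u hu).1 ?_, ?_⟩
  · have h1 : Q (fun _ => 1) = 1 := by simpa using hQ.bc1 ⟨0, hd⟩ 1 (by simp)
    have h2 := (abs_sub_le_iff.1 (hQ.lip u (fun _ => 1) hu fun _ => by simp)).2
    have h3 : ∑ i, |u i - 1| = ∑ i, (1 - u i) := Finset.sum_congr rfl fun i _ => by
      rw [abs_sub_comm, abs_of_nonneg (by linarith [(hu i).2])]
    rw [h3, h1] at h2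
    simp [Finset.sum_sub_distrib] at h2
    unfold Gd
    linarith
  · have : Nonempty (Fin d) := ⟨⟨0, hd⟩⟩
    refine le_ciInf fun i => ?_
    rw [← hQ.bc1 i (u i) (hu i)]
    refine hQ.mono_of_le hu (fun j => ?_) fun j => ?_
    · by_cases hj : j = i
      · simpa [hj] using hu i
      · simp [hj]
    · by_cases hj : j = i
      · simp [hj]
      · simpa [hj] using (hu j).2

theorem IsQuasiCopula.step {d : ℕ} {Q : (Fin d → ℝ) → ℝ} (hQ : IsQuasiCopula d Q)
    {u v : Fin d → ℝ} (hu : InCube u) (hv : InCube v) (i : Fin d)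
    (hj : ∀ j, j ≠ i → u j = v j) (hi : u i ≤ v i) :
    0 ≤ Q v - Q u ∧ Q v - Q u ≤ v i - u i := by
  refine ⟨sub_nonneg.2 (hQ.mono i u v hu hv hj hi), ?_⟩
  have h1 := (abs_sub_le_iff.1 (hQ.lip v u hv hu)).1
  rwa [Finset.sum_eq_single i (fun k _ hk => by simp [hj k hk]) (by simp),
    abs_of_nonneg (sub_nonneg.2 hi)] at h1

theorem IsQuasiCopula.feasible3 {d : ℕ} (hd : 0 < d) {Q : (Fin d → ℝ) → ℝ}
    (hQ : IsQuasiCopula d Q) {a b : Fin d → ℝ} (h : IsBox a b) :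
    Feasible3 a b fun I => Q (xI3 a b I) := by
  refine ⟨h, ?_, ?_, fun I => hQ.bounds hd (xI3_inCube h I)⟩
  · intro ℓ I J hIJ hJ
    have hI : I ℓ = 0 := by
      have := hIJ.1
      rw [hJ] at this
      apply Fin.ext
      simp at this ⊢
      omega
    have hs := hQ.step (xI3_inCube h I) (xI3_inCube h J) ℓ
      (fun j hj => by simp [xI3, hIJ.2 j hj]) (by simpa [xI3, hI, hJ] using (h ℓ).2.1.le)
    simpa [xI3, hI, hJ] using hs
  · intro ℓ I J hIJ hJ
    have hI : I ℓ = 1 := by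
      have := hIJ.1
      rw [hJ] at this
      apply Fin.ext
      simp at this ⊢
      omega
    have hs := hQ.step (xI3_inCube h I) (xI3_inCube h J) ℓ
      (fun j hj => by simp [xI3, hIJ.2 j hj]) (by simpa [xI3, hI, hJ] using (h ℓ).2.2)
    simpa [xI3, hI, hJ] using hs

/-- an optimal solution to the linear program on the `3^d` grid
extends to a quasi-copula, and its value is the minimal `Q`-volume over all
`d`-quasi-copulas and all `d`-boxes. -/
theorem LP3_optimal_is_minimal_volume
    (d : ℕ) (hd : 2 ≤ d) (a b : Fin d → ℝ) (q : (Fin d → Fin 3) → ℝ)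
    (hfeas : Feasible3 a b q)
    (hopt : ∀ (a' b' : Fin d → ℝ) (q' : (Fin d → Fin 3) → ℝ),
        Feasible3 a' b' q' → Vq3 q ≤ Vq3 q') :
    (∃ Q : (Fin d → ℝ) → ℝ, IsQuasiCopula d Q ∧
        ∀ I : Fin d → Fin 3, Q (xI3 a b I) = q I) ∧
    (∀ (Q : (Fin d → ℝ) → ℝ) (a' b' : Fin d → ℝ), IsQuasiCopula d Q →
        IsBox a' b' → Vq3 q ≤ boxVolume Q a' b') ∧
    (∃ (Q : (Fin d → ℝ) → ℝ) (a' b' : Fin d → ℝ), IsQuasiCopula d Q ∧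
        IsBox a' b' ∧ boxVolume Q a' b' = Vq3 q) := by
  have hd0 : 0 < d := by omega
  have hQ := hfeas.isQuasiCopula_ext hd0
  refine ⟨⟨ext a b q, hQ, hfeas.ext_xI3⟩, fun Q a' b' hQ' hbox => ?_,
    ext a b q, a, b, hQ, hfeas.1, Vq3_eq_boxVolume hfeas.ext_xI3⟩
  exact (hopt a' b' _ (hQ'.feasible3 hd0 hbox)).trans_eq (Vq3_eq_boxVolume fun _ => rfl).symm

end QC
end

section
/- There exists a 6-quasi-copula Q : [0,1]^6 → [0,1] such that the Q-volume of the box B = [5/8, 15/16]^6 equals −75/16; explicitly, one may take Q with vertex values depending only on the number ‖I‖₁ of coordinates of the vertex equal to 15/16, namely Q(x_I) = 0 for ‖I‖₁ ∈ {0,1,2}, Q(x_I) = 5/16 for ‖I‖₁ ∈ {3,4}, and Q(x_I) = 5/8 for ‖I‖₁ ∈ {5,6}. -/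
/-!
The quasi-copula is the least one with the prescribed values on the vertices. Given numbers `q I`
at points `p I` of the cube, the cone `u ↦ q I - ∑ i, (p I i - u i)⁺` is nondecreasing and
1-Lipschitz for the `ℓ¹` distance, and it lies below every coordinate `u i` as soon as
`q I ≤ p I i`. The maximum of `0`, `G_d` and all these cones inherits the three properties; being
squeezed between `max 0 G_d` and `min u i`, it satisfies the boundary conditions, so it is a
quasi-copula.

It takes the value `q J` at `p J` provided that `G_d (p J) ≤ q J` and
`q I ≤ q J + ∑ i, (p I i - p J i)⁺` for all `I`. For the vertices of `[5/8, 15/16]^6` the last sum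
is `5/16` times the number of `i` with `I i = 1`, `J i = 0`. As this number is at least
`‖I‖₁ - ‖J‖₁`, the condition holds because the profile `0,0,0,1,1,2,2` of the `q I`, in units of `5/16`, is
nondecreasing with increments at most `1`. Moreover `G_6 (p J) = (5/16) * (‖J‖₁ - 4) ≤ q J`, and
`q I ≤ 5/8`, which is the smallest coordinate of a vertex.
The volume is then `(5/16) * (-20 + 15 - 2 * 6 + 2) = -75/16`.
-/

namespace QC

/-- The prescribed values at the vertices, in units of `5/16`, as a function of `‖I‖₁`. -/
def profile (k : ℕ) : ℕ := if k ≤ 2 then 0 else if k ≤ 4 then 1 else 2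

/-- The vertex `x_I` of the box `[5/8, 15/16]^6`. -/
noncomputable def boxVertex (I : Fin 6 → Bool) : Fin 6 → ℝ :=
  vertex (fun _ => (5:ℝ)/8) (fun _ => (15:ℝ)/16) I

/-- The least monotone 1-Lipschitz function (for the `ℓ¹` distance) on `ℝ^6` that is at least the
prescribed value at the vertex `x_I`, without regard to sign. -/
noncomputable def cone (I : Fin 6 → Bool) (u : Fin 6 → ℝ) : ℝ :=
  5 / 16 * (profile (normOne I) : ℝ) - ∑ i, max 0 (boxVertex I i - u i)

/-- The quasi-copula: the maximum of `0`, `G_6` and the cones of all vertices. -/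
noncomputable def coneMax (u : Fin 6 → ℝ) : ℝ :=
  max (max 0 (Gd u)) (Finset.univ.sup' Finset.univ_nonempty fun I => cone I u)

lemma coneMax_le_iff {u : Fin 6 → ℝ} {c : ℝ} :
    coneMax u ≤ c ↔ 0 ≤ c ∧ Gd u ≤ c ∧ ∀ I, cone I u ≤ c := by
  simp [coneMax, and_assoc]

lemma parts_le_coneMax (u : Fin 6 → ℝ) :
    0 ≤ coneMax u ∧ Gd u ≤ coneMax u ∧ ∀ I, cone I u ≤ coneMax u :=
  coneMax_le_iff.1 le_rfl

lemma profile_le_two (k : ℕ) : profile k ≤ 2 := by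
  unfold profile; split_ifs <;> omega

/-- The compatibility of the prescribed values with the Lipschitz condition between vertices. -/
lemma profile_le_add {a b c : ℕ} (h : a ≤ b + c) : profile a ≤ profile b + c := by
  unfold profile; split_ifs <;> omega

lemma five_eighths_le_boxVertex (I : Fin 6 → Bool) (i : Fin 6) : 5 / 8 ≤ boxVertex I i := by
  unfold boxVertex vertex; split_ifs <;> norm_num

lemma cone_le_coord (I : Fin 6 → Bool) (u : Fin 6 → ℝ) (i : Fin 6) : cone I u ≤ u i := by
  have h1 : max 0 (boxVertex I i - u i) ≤ ∑ j, max 0 (boxVertex I j - u j) :=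
    Finset.single_le_sum (f := fun j => max 0 (boxVertex I j - u j))
      (fun j _ => le_max_left _ _) (Finset.mem_univ i)
  have h2 := le_max_right 0 (boxVertex I i - u i)
  have h3 : (profile (normOne I) : ℝ) ≤ 2 := by exact_mod_cast profile_le_two _
  have h4 := five_eighths_le_boxVertex I i
  unfold cone
  linarith

lemma Gd_le_coord {u : Fin 6 → ℝ} (hu : InCube u) (i : Fin 6) : Gd u ≤ u i := by
  have h : ∑ j, (1 - u j) ≥ 1 - u i :=
    Finset.single_le_sum (f := fun j => 1 - u j)
      (fun j _ => sub_nonneg.2 (hu j).2) (Finset.mem_univ i)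
  simp only [Finset.sum_sub_distrib, Finset.sum_const, Finset.card_univ, Fintype.card_fin,
    nsmul_eq_mul] at h
  unfold Gd
  linarith

lemma coneMax_le_coord {u : Fin 6 → ℝ} (hu : InCube u) (i : Fin 6) : coneMax u ≤ u i :=
  coneMax_le_iff.2 ⟨(hu i).1, Gd_le_coord hu i, fun I => cone_le_coord I u i⟩

/-- Monotonicity and the Lipschitz condition at once: only the increases of the coordinates
from `v` to `u` count. -/
lemma coneMax_le_add (u v : Fin 6 → ℝ) :
    coneMax u ≤ coneMax v + ∑ i, max 0 (u i - v i) := by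
  obtain ⟨h0, hG, hC⟩ := parts_le_coneMax v
  have hs : 0 ≤ ∑ i, max 0 (u i - v i) := Finset.sum_nonneg fun i _ => le_max_left _ _
  refine coneMax_le_iff.2 ⟨by linarith, ?_, fun I => ?_⟩
  · have h : ∑ i, (u i - v i) ≤ ∑ i, max 0 (u i - v i) :=
      Finset.sum_le_sum fun i _ => le_max_right _ _
    rw [Finset.sum_sub_distrib] at h
    unfold Gd at *
    linarith
  · have h : ∑ i, max 0 (boxVertex I i - v i)
        ≤ ∑ i, (max 0 (boxVertex I i - u i) + max 0 (u i - v i)) := by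
      refine Finset.sum_le_sum fun i _ => max_le ?_ ?_
      · exact add_nonneg (le_max_left _ _) (le_max_left _ _)
      · have h1 := le_max_right 0 (boxVertex I i - u i)
        have h2 := le_max_right 0 (u i - v i)
        linarith
    rw [Finset.sum_add_distrib] at h
    have := hC I
    unfold cone at *
    linarith

lemma coneMax_isQuasiCopula : IsQuasiCopula 6 coneMax where
  mem u hu := ⟨(parts_le_coneMax u).1, (coneMax_le_coord hu 0).trans (hu 0).2⟩
  bc0 := by
    rintro u hu ⟨i, hi⟩
    exact le_antisymm (hi ▸ coneMax_le_coord hu i) (parts_le_coneMax u).1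
  bc1 i t ht := by
    have hu : InCube (fun j : Fin 6 => if j = i then t else 1) := by
      intro j
      by_cases h : j = i <;> simp [h, ht.1, ht.2]
    refine le_antisymm (by simpa using coneMax_le_coord hu i) ?_
    refine le_trans (le_of_eq ?_) (parts_le_coneMax _).2.1
    have h : ∀ j : Fin 6, (if j = i then t else 1) = 1 + if j = i then t - 1 else 0 := by
      intro j; split_ifs <;> ring
    simp only [Gd, h, Finset.sum_add_distrib, Finset.sum_ite_eq', Finset.mem_univ, if_true]
    norm_num
  mono i u v _ _ hne hi := by
    have hle : ∀ j, u j ≤ v j := fun j => by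
      by_cases h : j = i
      · exact h ▸ hi
      · exact (hne j h).le
    have h := coneMax_le_add u v
    simpa [max_eq_left (sub_nonpos.2 (hle _))] using h
  lip u v _ _ := by
    have key : ∀ x y : Fin 6 → ℝ, coneMax x - coneMax y ≤ ∑ i, |x i - y i| := fun x y => by
      have h1 := coneMax_le_add x y
      have h2 : ∑ i, max 0 (x i - y i) ≤ ∑ i, |x i - y i| :=
        Finset.sum_le_sum fun i _ => max_le (abs_nonneg _) (le_abs_self _)
      linarith
    refine abs_sub_le_iff.2 ⟨key u v, ?_⟩
    simpa only [abs_sub_comm] using key v u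

lemma sum_boxVertex_sub (I J : Fin 6 → Bool) :
    ∑ i, max 0 (boxVertex I i - boxVertex J i)
      = 5 / 16 * ((Finset.univ.filter fun k => I k = true ∧ ¬ J k = true).card : ℝ) := by
  rw [Finset.card_filter, Nat.cast_sum, Finset.mul_sum]
  refine Finset.sum_congr rfl fun i _ => ?_
  unfold boxVertex vertex
  cases I i <;> cases J i <;> norm_num

lemma normOne_le_add (I J : Fin 6 → Bool) :
    normOne I ≤ normOne J + (Finset.univ.filter fun k => I k = true ∧ ¬ J k = true).card := by
  unfold normOne
  refine le_trans (Finset.card_le_card fun k hk => ?_) (Finset.card_union_le _ _)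
  by_cases h : J k = true <;> simp_all

lemma Gd_boxVertex (J : Fin 6 → Bool) : Gd (boxVertex J) = 5 / 16 * ((normOne J : ℝ) - 4) := by
  have h : ∀ i, boxVertex J i = 5 / 8 + 5 / 16 * (if J i = true then 1 else 0) := fun i => by
    unfold boxVertex vertex
    split_ifs <;> norm_num
  simp only [Gd, h, Finset.sum_add_distrib, ← Finset.mul_sum, Finset.sum_boole, normOne]
  norm_num
  ring

lemma coneMax_boxVertex (J : Fin 6 → Bool) :
    coneMax (boxVertex J) = 5 / 16 * (profile (normOne J) : ℝ) := by
  refine le_antisymm (coneMax_le_iff.2 ⟨by positivity, ?_, fun I => ?_⟩) ?_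
  · have h6 : normOne J ≤ 6 := (Finset.card_filter_le _ _).trans (by simp)
    have h : normOne J ≤ profile (normOne J) + 4 := by
      unfold profile; split_ifs <;> omega
    have h' : (normOne J : ℝ) ≤ profile (normOne J) + 4 := by exact_mod_cast h
    rw [Gd_boxVertex]
    linarith
  · have h := profile_le_add (normOne_le_add I J)
    have h' : (profile (normOne I) : ℝ) ≤ profile (normOne J)
        + (Finset.univ.filter fun k => I k = true ∧ ¬ J k = true).card := by exact_mod_cast h
    rw [cone, sum_boxVertex_sub]
    linarith
  · simpa [cone] using (parts_le_coneMax (boxVertex J)).2.2 J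

lemma sum_sign_profile :
    ∑ I : Fin 6 → Bool, (-1 : ℤ) ^ (6 - normOne I) * (profile (normOne I) : ℤ) = -15 := by
  decide +kernel

/-- a 6-quasi-copula whose volume on `[5/8, 15/16]^6`
equals `-75/16`. -/
theorem exists_quasiCopula_dim6_volume_neg
    : ∃ Q : (Fin 6 → ℝ) → ℝ, IsQuasiCopula 6 Q ∧
      (∀ I : Fin 6 → Bool,
        Q (vertex (fun _ => (5:ℝ)/8) (fun _ => (15:ℝ)/16) I) =
          if normOne I ≤ 2 then 0
          else if normOne I ≤ 4 then 5/16
          else 5/8) ∧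
      boxVolume Q (fun _ => (5:ℝ)/8) (fun _ => (15:ℝ)/16) = -75/16 := by
  refine ⟨coneMax, coneMax_isQuasiCopula, fun I => ?_, ?_⟩
  · refine (coneMax_boxVertex I).trans ?_
    unfold profile
    split_ifs <;> norm_num
  · have h : ((∑ I : Fin 6 → Bool, (-1 : ℤ) ^ (6 - normOne I) * (profile (normOne I) : ℤ) : ℤ) : ℝ)
        = -15 := by rw [sum_sign_profile]; norm_num
    push_cast at h
    calc boxVolume coneMax (fun _ => (5:ℝ)/8) (fun _ => (15:ℝ)/16)
        = ∑ I : Fin 6 → Bool, 5 / 16 * ((-1 : ℝ) ^ (6 - normOne I) * (profile (normOne I) : ℝ)) :=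
          Finset.sum_congr rfl fun I _ => by
            rw [← boxVertex, coneMax_boxVertex]; ring
      _ = -75/16 := by rw [← Finset.mul_sum, h]; norm_num

end QC
end
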